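/- arXiv:2204.07006 — 2 statements merged into one kernel-verified Lean document; each statement's English description precedes it below -/
import Mathlib

section
/- Let A → B be a local morphism of regular local rings with dim(A) = dim(B) + 1, and M a B-module finitely generated over A with dim_k Tor_1^A(M,k) ≤ dim_k Tor_0^A(M,k), where k is the residue field of A. Then M is free over B. -/
open IsLocalRing CategoryTheory

/-- The embedding dimension of a local ring: the minimal number of generators of its
maximal ideal. -/
noncomputable def edim (A : Type) [CommRing A] [IsLocalRing A] : ℕ :=
  sInf {k : ℕ | ∃ y : Fin k → A, Ideal.span (Set.range y) = maximalIdeal A}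

/-- A regular local ring: a Noetherian local ring whose embedding dimension equals its
Krull dimension. -/
def IsRegularLocal (R : Type) [CommRing R] [IsLocalRing R] : Prop :=
  IsNoetherianRing R ∧ (edim R : WithBot ℕ∞) = ringKrullDim R

/-- `Tor₁^A(M, k)`, where `k` is the residue field of the local ring `A`. -/
noncomputable def torOne (A : Type) [CommRing A] [IsLocalRing A]
    (M : Type) [AddCommGroup M] [Module A M] : ModuleCat A :=
  ((Tor (ModuleCat A) 1).obj (ModuleCat.of A M)).obj
    (ModuleCat.of A (A ⧸ maximalIdeal A))


/-- elementary form of regularity -/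
def RegN (R : Type) [CommRing R] [IsLocalRing R] (n : ℕ) : Prop :=
  IsNoetherianRing R ∧ ringKrullDim R = n ∧
    ∃ y : Fin n → R, Ideal.span (Set.range y) = maximalIdeal R

lemma regN_of {R : Type} [CommRing R] [IsLocalRing R] [hN : IsNoetherianRing R]
    (hd : ringKrullDim R = ((sInf {k : ℕ | ∃ y : Fin k → R, Ideal.span (Set.range y) = maximalIdeal R} : ℕ) : WithBot ℕ∞)) :
    ∃ n, RegN R n := by
  refine ⟨_, hN, hd, ?_⟩
  apply Nat.sInf_mem (s := {k : ℕ | ∃ y : Fin k → R, Ideal.span (Set.range y) = maximalIdeal R})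
  obtain ⟨n, f, hf⟩ := Submodule.fg_iff_exists_fin_generating_family.mp
    (IsNoetherian.noetherian (maximalIdeal R))
  exact ⟨n, f, hf⟩

lemma isLocalRing_quot {R : Type} [CommRing R] [IsLocalRing R] {x : R} (hx : x ∈ maximalIdeal R) :
    IsLocalRing (R ⧸ Ideal.span {x}) := by
  have : Nontrivial (R ⧸ Ideal.span {x}) := by
    rw [Ideal.Quotient.nontrivial_iff]
    intro h
    have : Ideal.span {x} ≤ maximalIdeal R := by simpa [Ideal.span_le] using hx
    exact (maximalIdeal.isMaximal R).ne_top (top_le_iff.mp (h ▸ this))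
  exact IsLocalRing.of_surjective' (Ideal.Quotient.mk _) Ideal.Quotient.mk_surjective

lemma map_maximalIdeal_quot {R : Type} [CommRing R] [IsLocalRing R] {x : R} (hx : x ∈ maximalIdeal R)
    [IsLocalRing (R ⧸ Ideal.span {x})] :
    (maximalIdeal R).map (Ideal.Quotient.mk (Ideal.span {x})) = maximalIdeal _ := by
  have h : Ideal.span {x} ≤ maximalIdeal R := by simpa [Ideal.span_le] using hx
  refine IsLocalRing.eq_maximalIdeal ?_
  have := Ideal.map_eq_top_or_isMaximal_of_surjective (Ideal.Quotient.mk (Ideal.span {x}))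
    Ideal.Quotient.mk_surjective (maximalIdeal.isMaximal R)
  refine this.resolve_left fun h' => ?_
  have h2 := congrArg (Ideal.comap (Ideal.Quotient.mk (Ideal.span {x}))) h'
  rw [Ideal.comap_map_of_surjective _ Ideal.Quotient.mk_surjective, Ideal.comap_top,
    ← RingHom.ker_eq_comap_bot, Ideal.mk_ker, sup_eq_left.mpr h] at h2
  exact (maximalIdeal.isMaximal R).ne_top h2

lemma regN_quot {R : Type} [CommRing R] [IsLocalRing R] {n : ℕ} (h : RegN R (n+1)) {x : R}
    (hx : x ∈ maximalIdeal R) (hx2 : x ∉ (maximalIdeal R)^2)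
    [IsLocalRing (R ⧸ Ideal.span {x})] : RegN (R ⧸ Ideal.span {x}) n := by
  obtain ⟨hN, hd, y, hy⟩ := h
  have hmap := map_maximalIdeal_quot hx
  have key : ∃ z : Fin n → (R ⧸ Ideal.span {x}), Ideal.span (Set.range z) = maximalIdeal _ := by
    have hx' := hx
    rw [← hy, Ideal.mem_span_range_iff_exists_fun] at hx'
    obtain ⟨c, hc⟩ := hx'
    have : ∃ j, c j ∉ maximalIdeal R := by
      by_contra hcon
      push Not at hcon
      apply hx2
      rw [← hc, pow_two]
      exact Ideal.sum_mem _ fun i _ => Ideal.mul_mem_mul (hcon i)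
        (hy ▸ Ideal.subset_span (Set.mem_range_self i))
    obtain ⟨j, hj⟩ := this
    have hu : IsUnit (c j) := by simpa using hj
    refine ⟨fun i => Ideal.Quotient.mk _ (y (j.succAbove i)), ?_⟩
    rw [← hmap, ← hy, Ideal.map_span]
    apply le_antisymm
    · apply Ideal.span_mono
      rintro _ ⟨i, rfl⟩
      exact ⟨_, ⟨_, rfl⟩, rfl⟩
    · rw [Ideal.span_le]
      rintro _ ⟨_, ⟨i, rfl⟩, rfl⟩
      rcases Fin.eq_self_or_eq_succAbove j i with rfl | ⟨k, rfl⟩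
      · have h0 : Ideal.Quotient.mk (Ideal.span {x}) x = 0 := by
          rw [Ideal.Quotient.eq_zero_iff_mem]; exact Ideal.mem_span_singleton_self x
        have hc' := congrArg (Ideal.Quotient.mk (Ideal.span {x})) hc
        rw [h0, Fin.sum_univ_succAbove _ i, map_add, map_mul] at hc'
        have hu' := hu.map (Ideal.Quotient.mk (Ideal.span {x}))
        rw [SetLike.mem_coe, ← Ideal.unit_mul_mem_iff_mem _ hu', eq_neg_of_add_eq_zero_left hc',
          neg_mem_iff, map_sum]
        refine Ideal.sum_mem _ fun k _ => ?_
        rw [map_mul]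
        exact Ideal.mul_mem_left _ _ (Ideal.subset_span ⟨k, rfl⟩)
      · exact Ideal.subset_span ⟨k, rfl⟩
  refine ⟨inferInstance, le_antisymm ?_ ?_, key⟩
  · obtain ⟨z, hz⟩ := key
    refine (ringKrullDim_le_spanFinrank_maximalIdeal _).trans ?_
    rw [← hz]
    have h1 := Submodule.spanFinrank_span_le_ncard_of_finite (R := R ⧸ Ideal.span {x}) (Set.finite_range z)
    have h2 : (Set.range z).ncard ≤ n := by
      rw [← Set.image_univ]
      simpa [Set.ncard_univ] using Set.ncard_image_le (f := z) (Set.finite_univ)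
    exact_mod_cast h1.trans h2
  · have h1 := ringKrullDim_le_ringKrullDim_quotient_add_card ({x} : Finset R)
      (by simpa [IsLocalRing.ringJacobson_eq_maximalIdeal] using hx)
    rw [hd, Finset.coe_singleton, Finset.card_singleton] at h1
    have h2 : ((n : WithBot ℕ∞) + 1) ≤ ringKrullDim (R ⧸ Ideal.span {x}) + 1 := by exact_mod_cast h1
    generalize ringKrullDim (R ⧸ Ideal.span {x}) = d at h2 ⊢
    cases d with
    | bot => simp at h2
    | coe d => 
      cases d with
      | top => exact le_top
      | coe d =>  
        norm_cast at h2 ⊢; omega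

lemma regN_zero {R : Type} [CommRing R] [IsLocalRing R] (h : RegN R 0) : IsField R := by
  obtain ⟨-, -, y, hy⟩ := h
  rw [IsLocalRing.isField_iff_maximalIdeal_eq, ← hy]
  simp

lemma regN_sq {R : Type} [CommRing R] [IsLocalRing R] {n : ℕ} (h : RegN R (n+1)) :
    ¬ maximalIdeal R ≤ (maximalIdeal R)^2 := by
  obtain ⟨hN, hd, y, hy⟩ := h
  intro hle
  have : maximalIdeal R = ⊥ := by
    apply Submodule.eq_bot_of_le_smul_of_le_jacobson_bot (maximalIdeal R) _
      (IsNoetherian.noetherian _) _ (IsLocalRing.maximalIdeal_le_jacobson _)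
    rwa [smul_eq_mul, ← pow_two]
  have hf := IsLocalRing.isField_iff_maximalIdeal_eq.mpr this
  have := ringKrullDim_eq_zero_of_isField hf
  rw [this] at hd
  norm_cast at hd

/-- prime avoidance -/
lemma exists_avoid {R : Type} [CommRing R] [IsLocalRing R] {n : ℕ} (h : RegN R (n+1))
    {S : Set (Ideal R)} (hS : S.Finite) (hp : ∀ p ∈ S, p.IsPrime) (hm : maximalIdeal R ∉ S) :
    ∃ x ∈ maximalIdeal R, x ∉ (maximalIdeal R)^2 ∧ ∀ p ∈ S, x ∉ p := by
  have := (Ideal.subset_union_prime_finite (s := insert ((maximalIdeal R)^2) S) (hS.insert _)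
    (f := id) ((maximalIdeal R)^2) ((maximalIdeal R)^2) (fun i hi h1 _ => hp i (hi.resolve_left h1))
    (I := maximalIdeal R)).not.mpr ?_
  · rw [Set.not_subset] at this
    obtain ⟨x, hx, hx'⟩ := this
    simp only [Set.mem_iUnion, not_exists] at hx'
    exact ⟨x, hx, fun hh => hx' _ (Set.mem_insert _ _) hh, fun p hp hh => hx' p (Or.inr hp) hh⟩
  · rintro ⟨p, hpS, hle⟩
    rcases hpS with rfl | hpS
    · exact regN_sq h hle
    · exact hm ((maximalIdeal.isMaximal R).eq_of_le (hp p hpS).ne_top hle ▸ hpS)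

lemma regN_isDomain (n : ℕ) : ∀ {R : Type} [CommRing R] [IsLocalRing R], RegN R n → IsDomain R := by
  induction n with
  | zero => intro R _ _ h; exact (regN_zero h).isDomain
  | succ n ih =>
    intro R _ _ h
    have hN := h.1
    obtain ⟨x, hx, hx2, hxp⟩ := exists_avoid h (minimalPrimes.finite_of_isNoetherianRing R)
      (fun p hp => hp.1.1) (by
        intro hm
        have h0 : (maximalIdeal R).height = 0 := Ideal.height_eq_zero_iff.mpr hm
        have h1 := maximalIdeal_height_eq_ringKrullDim (R := R)
        rw [h0, h.2.1] at h1
        norm_cast at h1)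
    have := isLocalRing_quot hx
    have := ih (regN_quot h hx hx2)
    have hpr : (Ideal.span {x}).IsPrime := (Ideal.Quotient.isDomain_iff_prime _).mp this
    obtain ⟨q, hq, hqx⟩ := Ideal.exists_minimalPrimes_le (I := ⊥) (J := Ideal.span {x}) bot_le
    have hqb : q = ⊥ := by
      apply Submodule.eq_bot_of_le_smul_of_le_jacobson_bot (maximalIdeal R) _
        (IsNoetherian.noetherian _) _ (IsLocalRing.maximalIdeal_le_jacobson _)
      intro y hy
      obtain ⟨a, rfl⟩ := Ideal.mem_span_singleton'.mp (hqx hy)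
      have : a ∈ q := (hq.1.1.mem_or_mem hy).resolve_right (hxp q hq)
      rw [mul_comm]
      exact Submodule.smul_mem_smul hx this
    have := hq.1.1
    rw [hqb] at this
    have : NoZeroDivisors R := ⟨fun {a b} hab => by simpa using this.mem_or_mem (x := a) (y := b) (by simpa using hab)⟩
    exact NoZeroDivisors.to_isDomain R

lemma regN_exists_isRegular (n : ℕ) : ∀ {R : Type} [CommRing R] [IsLocalRing R], RegN R n →
    ∃ rs : List R, rs.length = n ∧ (∀ r ∈ rs, r ∈ maximalIdeal R) ∧
      RingTheory.Sequence.IsRegular R rs := by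
  induction n with
  | zero =>
    intro R _ _ h
    exact ⟨[], rfl, by simp, by simp [RingTheory.Sequence.isRegular_iff]⟩
  | succ n ih =>
    intro R _ _ h
    have hdom := regN_isDomain _ h
    obtain ⟨x, hx, hx2, -⟩ := exists_avoid h (S := ∅) (by simp) (by simp) (by simp)
    have := isLocalRing_quot hx
    obtain ⟨rs, hl, hm, hr⟩ := ih (regN_quot h hx hx2)
    have hsurj : Function.Surjective (List.map (Ideal.Quotient.mk (Ideal.span {x}))) :=
      List.map_surjective_iff.mpr Ideal.Quotient.mk_surjective
    obtain ⟨rs, rfl⟩ := hsurj rs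
    have hx0 : x ≠ 0 := by rintro rfl; exact hx2 (zero_mem _)
    refine ⟨x :: rs, by simpa using hl, ?_, ?_⟩
    · intro r hr
      rcases List.mem_cons.mp hr with rfl | hr
      · exact hx
      · have h1 := hm _ (List.mem_map_of_mem (f := Ideal.Quotient.mk (Ideal.span {x})) hr)
        by_contra hcon
        have hu : IsUnit r := by simpa using hcon
        exact (mem_maximalIdeal _).mp h1 (hu.map _)
    · rw [RingTheory.Sequence.isRegular_cons_iff']
      refine ⟨IsSMulRegular.of_right_eq_zero_of_smul fun y hy => by simpa [hx0] using hy, ?_⟩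
      have e : QuotSMulTop x R ≃ₗ[R] (R ⧸ Ideal.span {x}) :=
        Submodule.quotEquivOfEq _ _ (by rw [← Submodule.ideal_span_singleton_smul]; simp)
      have e' := e.extendScalarsOfSurjective (S := R ⧸ Ideal.span {x}) Ideal.Quotient.mk_surjective
      exact (e'.isRegular_congr _).mpr hr


lemma subsing_ext_third {A : Type} [CommRing A] {X Y Z N : Type} [AddCommGroup X] [Module A X]
    [AddCommGroup Y] [Module A Y] [AddCommGroup Z] [Module A Z] [AddCommGroup N] [Module A N]
    (f : X →ₗ[A] Y) (g : Y →ₗ[A] Z) (hf : Function.Injective f) (hg : Function.Surjective g)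
    (hfg : Function.Exact f g) (i : ℕ)
    (h1 : Subsingleton (Abelian.Ext (ModuleCat.of A N) (ModuleCat.of A Y) i))
    (h2 : Subsingleton (Abelian.Ext (ModuleCat.of A N) (ModuleCat.of A X) (i+1))) :
    Subsingleton (Abelian.Ext (ModuleCat.of A N) (ModuleCat.of A Z) i) := by
  let S : ShortComplex (ModuleCat A) := ShortComplex.mk (ModuleCat.ofHom f) (ModuleCat.ofHom g)
    (by ext x; simpa using hfg.apply_apply_eq_zero x)
  have hS : S.ShortExact := 
    { exact := (ShortComplex.ShortExact.moduleCat_exact_iff_function_exact S).mpr hfg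
      mono_f := (ModuleCat.mono_iff_injective _).mpr hf
      epi_g := (ModuleCat.epi_iff_surjective _).mpr hg }
  have zero1 := AddCommGrpCat.isZero_of_iff_subsingleton.mpr h1
  have zero2 := AddCommGrpCat.isZero_of_iff_subsingleton.mpr h2
  exact AddCommGrpCat.subsingleton_of_isZero <| ShortComplex.Exact.isZero_of_both_zeros
        ((Abelian.Ext.covariant_sequence_exact₃' (ModuleCat.of A N) hS) i (i + 1) rfl)
        (zero1.eq_zero_of_src _) (zero2.eq_zero_of_tgt _)


lemma isRegular_fin {A : Type} [CommRing A] [IsLocalRing A] {n : ℕ} (hn : n ≠ 0) {rs : List A}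
    (hm : ∀ r ∈ rs, r ∈ maximalIdeal A)
    (h : RingTheory.Sequence.IsRegular A rs) : RingTheory.Sequence.IsRegular (Fin n → A) rs := by
  have : NeZero n := ⟨hn⟩
  rw [IsLocalRing.isRegular_iff_isWeaklyRegular_of_subset_maximalIdeal hm]
  have := RingTheory.Sequence.IsWeaklyRegular.of_flat (S := Fin n → A) h.1
  exact (RingTheory.Sequence.isWeaklyRegular_map_algebraMap_iff (Fin n → A) (Fin n → A) rs).mp this

lemma ext_vanish_fin {A : Type} [CommRing A] [IsLocalRing A] {d n : ℕ} (hA : RegN A d)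
    (hn : n ≠ 0) (i : ℕ) (hi : i < d) :
    Subsingleton (Abelian.Ext (ModuleCat.of A (A ⧸ maximalIdeal A)) (ModuleCat.of A (Fin n → A)) i) := by
  have := hA.1
  have : NeZero n := ⟨hn⟩
  obtain ⟨rs, hl, hm, hr⟩ := regN_exists_isRegular d hA
  refine ModuleCat.subsingleton_ext_of_exists_isRegular (maximalIdeal A) _ ?_ _ ?_ rs hm
    (isRegular_fin hn hm hr) i (hl ▸ hi)
  · rw [Module.support_eq_zeroLocus, Ideal.annihilator_quotient]
  · rw [lt_top_iff_ne_top]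
    exact (Submodule.top_ne_ideal_smul_of_le_jacobson_annihilator
      (IsLocalRing.maximalIdeal_le_jacobson _)).symm

open Pointwise in
lemma main_induction {A : Type} [CommRing A] [IsLocalRing A] [IsNoetherianRing A] (d : ℕ) :
    ∀ {B M : Type} [CommRing B] [IsLocalRing B] [Algebra A B] 
    (_ : ∀ a ∈ maximalIdeal A, algebraMap A B a ∈ maximalIdeal B) (_ : RegN B d)
    [AddCommGroup M] [Module B M] [Module A M] [IsScalarTower A B M]
    [Module.Finite A M]
    (_ : ∀ i < d, Subsingleton (Abelian.Ext (ModuleCat.of A (A ⧸ maximalIdeal A)) (ModuleCat.of A M) i)),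
    Module.Free B M := by
  induction d with
  | zero =>
    intro B M _ _ _ _ hB _ _ _ _ _ _
    let _ := (regN_zero hB).toField
    exact Module.Free.of_divisionRing B M
  | succ d ih =>
    intro B M _ _ _ hloc hB _ _ _ _ _ hext
    have := hB.1
    have : Module.Finite B M := Module.Finite.of_restrictScalars_finite A B M
    have h0 : Subsingleton ((A ⧸ maximalIdeal A) →ₗ[A] M) := by
      have := hext 0 d.succ_pos
      exact (Abelian.Ext.addEquiv₀.trans ModuleCat.homAddEquiv).subsingleton_congr.mp this
    obtain ⟨x, hx, hx2, hxp⟩ := exists_avoid hB (associatedPrimes.finite B M)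
      (fun p hp => hp.isPrime) (by
        intro hm
        obtain ⟨hp, y, hy⟩ := Submodule.isAssociatedPrime_iff.mp hm
        have hy0 : y = 0 := by
          let f : (A ⧸ maximalIdeal A) →ₗ[A] M := Submodule.liftQ _ (LinearMap.toSpanSingleton A M y) (by
            intro a ha
            have h1 := hloc a ha
            rw [hy, Submodule.mem_colon_singleton, Submodule.mem_bot, algebraMap_smul] at h1
            simpa using h1)
          have h1 : f (Submodule.Quotient.mk 1) = 0 := by rw [Subsingleton.elim f 0]; rfl
          simpa only [f, Submodule.liftQ_apply, LinearMap.toSpanSingleton_apply, one_smul] using h1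
        apply hp.ne_top
        rw [hy, hy0, Ideal.eq_top_iff_one, Submodule.mem_colon_singleton]
        simp)
    have hreg : IsSMulRegular M x := by
      have h1 : x ∉ ⋃ p ∈ associatedPrimes B M, (p : Set B) := by simpa using hxp
      rw [biUnion_associatedPrimes_eq_compl_regular] at h1
      simpa using h1
    have := isLocalRing_quot hx
    have : Module.FinitePresentation B M := Module.finitePresentation_of_finite B M
    rw [← Module.free_quotSMulTop_iff_free (x := x) (R := B) (M := M) (mem := IsLocalRing.maximalIdeal_le_jacobson _ hx) (reg := hreg)]
    have : IsScalarTower A (B ⧸ Ideal.span {x}) (QuotSMulTop x M) := by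
      refine ⟨fun a b z => ?_⟩
      obtain ⟨b, rfl⟩ := Ideal.Quotient.mk_surjective b
      obtain ⟨z, rfl⟩ := Submodule.Quotient.mk_surjective _ z
      have h1 : a • (Ideal.Quotient.mk (Ideal.span {x}) b) = Ideal.Quotient.mk (Ideal.span {x}) (a • b) := rfl
      rw [h1]
      change Submodule.Quotient.mk ((a • b) • z) = Submodule.Quotient.mk (a • b • z)
      rw [smul_assoc]
    refine ih (B := B ⧸ Ideal.span {x}) (M := QuotSMulTop x M) ?_ (regN_quot hB hx hx2) ?_
    · intro a ha
      rw [mem_maximalIdeal, mem_nonunits_iff]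
      intro hu
      have h1 := map_maximalIdeal_quot hx
      have h2 : algebraMap A (B ⧸ Ideal.span {x}) a ∈ maximalIdeal (B ⧸ Ideal.span {x}) := by
        rw [← h1]
        exact Ideal.mem_map_of_mem (Ideal.Quotient.mk (Ideal.span {x})) (hloc a ha)
      exact (mem_maximalIdeal _).mp h2 hu
    · intro i hi
      let f : M →ₗ[A] M := (LinearMap.lsmul B M x).restrictScalars A
      let g : M →ₗ[A] QuotSMulTop x M := (Submodule.mkQ (x • (⊤ : Submodule B M))).restrictScalars A
      have hf : Function.Injective f := fun a b h => hreg h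
      have hg : Function.Surjective g := Submodule.mkQ_surjective (x • (⊤ : Submodule B M))
      have hfg : Function.Exact f g := LinearMap.exact_lsmul_mkQ_smul_top M x
      have key := subsing_ext_third (N := A ⧸ maximalIdeal A) f g hf hg hfg i (hext i (by omega))
        (hext (i+1) (by omega))
      exact key


lemma dim_le_of_isIntegral {A C : Type} [CommRing A] [CommRing C] [Algebra A C]
    [Algebra.IsIntegral A C] [FaithfulSMul A C] : ringKrullDim A ≤ ringKrullDim C := by
  unfold ringKrullDim
  refine iSup_le fun l => ?_
  obtain ⟨P, hP, hP'⟩ := Ideal.nonempty_primesOver (S := C) (RelSeries.head l).asIdeal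
  obtain ⟨L, hL, -⟩ := Ideal.exists_ltSeries_of_hasGoingUp l P
  rw [← hL]
  exact le_iSup (fun L : LTSeries (PrimeSpectrum C) => (L.length : WithBot ℕ∞)) L

lemma exists_ann {A B M : Type} [CommRing A] [CommRing B] [Algebra A B]
    [AddCommGroup M] [Module B M] [Module A M] [IsScalarTower A B M] [Module.Finite A M]
    (hdim : ¬ ringKrullDim A ≤ ringKrullDim B) : ∃ a : A, a ≠ 0 ∧ ∀ m : M, a • m = 0 := by
  by_contra hcon
  push Not at hcon
  apply hdim
  have h1 : FaithfulSMul A (B ⧸ Module.annihilator B M) := by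
    rw [faithfulSMul_iff_algebraMap_injective, injective_iff_map_eq_zero]
    intro a ha
    by_contra ha0
    obtain ⟨m, hm⟩ := hcon a ha0
    apply hm
    have : algebraMap A B a ∈ Module.annihilator B M := Ideal.Quotient.eq_zero_iff_mem.mp ha
    rw [Module.mem_annihilator] at this
    rw [← this m, algebraMap_smul]
  have h2 : Algebra.IsIntegral A (B ⧸ Module.annihilator B M) := by
    refine ⟨fun c => ?_⟩
    obtain ⟨b, rfl⟩ := Ideal.Quotient.mk_surjective c
    obtain ⟨p, hp, hp0⟩ := LinearMap.exists_monic_and_aeval_eq_zero A (Algebra.lsmul A A M b)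
    refine ⟨p, hp, ?_⟩
    rw [← Polynomial.aeval_def]
    change Polynomial.aeval (Ideal.Quotient.mkₐ A (Module.annihilator B M) b) p = 0
    rw [Polynomial.aeval_algHom_apply] at hp0 ⊢
    apply Ideal.Quotient.eq_zero_iff_mem.mpr
    rw [Module.mem_annihilator]
    intro m
    exact LinearMap.congr_fun hp0 m
  exact dim_le_of_isIntegral.trans (ringKrullDim_quotient_le (Module.annihilator B M))

lemma injective_of_ann {A M : Type} [CommRing A] [IsDomain A]
    [AddCommGroup M] [Module A M] {n : ℕ} (p : (Fin n → A) →ₗ[A] M)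
    (φ : (Fin n → A) →ₗ[A] (Fin n → A)) (hφ : LinearMap.range φ = LinearMap.ker p)
    {a : A} (ha : a ≠ 0) (ham : ∀ m : M, a • m = 0) : Function.Injective φ := by
  have h1 : ∀ i, ∃ v, φ v = a • (Pi.single i 1 : Fin n → A) := by
    intro i
    have : a • (Pi.single i 1 : Fin n → A) ∈ LinearMap.ker p := by simp [ham]
    rw [← hφ] at this
    exact this
  choose v hv using h1
  let ψ : (Fin n → A) →ₗ[A] (Fin n → A) := (Pi.basisFun A (Fin n)).constr A v
  have h2 : φ ∘ₗ ψ = a • LinearMap.id := by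
    apply (Pi.basisFun A (Fin n)).ext
    intro i
    simp only [LinearMap.comp_apply, ψ, Module.Basis.constr_basis, hv]
    simp
  have h3 : LinearMap.det φ ≠ 0 := by
    intro h0
    have := congrArg LinearMap.det h2
    rw [LinearMap.det_comp, h0, zero_mul, LinearMap.det_smul] at this
    simp at this
    exact pow_ne_zero n ha this.symm
  rw [← LinearMap.ker_eq_bot]
  by_contra hk
  exact h3 (LinearMap.det_eq_zero_iff_ker_ne_bot.mpr hk)

lemma final_step {A B M : Type} [CommRing A] [IsLocalRing A] [CommRing B] [IsLocalRing B]
    [Algebra A B] [IsLocalHom (algebraMap A B)] {d : ℕ}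
    (hA : RegN A (d+1)) (hB : RegN B d)
    [AddCommGroup M] [Module B M] [Module A M] [IsScalarTower A B M]
    [Module.Finite A M] {n : ℕ} (p : (Fin n → A) →ₗ[A] M) (hp : Function.Surjective p)
    (φ : (Fin n → A) →ₗ[A] (Fin n → A)) (hφ : LinearMap.range φ = LinearMap.ker p) :
    Module.Free B M := by
  have := hA.1
  have := regN_isDomain _ hA
  by_cases hn : n = 0
  · subst hn
    have : Subsingleton M := hp.subsingleton
    infer_instance
  obtain ⟨a, ha, ham⟩ := exists_ann (A := A) (B := B) (M := M) (by
    rw [hA.2.1, hB.2.1]; norm_cast; omega)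
  have hinj := injective_of_ann p φ hφ ha ham
  refine main_induction (A := A) d ?_ hB ?_
  · intro a ha
    rw [mem_maximalIdeal, mem_nonunits_iff] at ha ⊢
    exact fun h => ha (isUnit_of_map_unit _ _ h)
  · intro i hi
    exact subsing_ext_third φ p hinj hp (LinearMap.exact_iff.mpr hφ.symm) i
      (ext_vanish_fin hA hn i (by omega)) (ext_vanish_fin hA hn (i+1) (by omega))


noncomputable section TorPart

open MonoidalCategory Limits

/-- tensor complex -/
abbrev tc {A : Type} [CommRing A] (X : ModuleCat.{0} A) (P : ChainComplex (ModuleCat.{0} A) ℕ) :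
    ChainComplex (ModuleCat.{0} A) ℕ :=
  (((tensoringLeft (ModuleCat.{0} A)).obj X).mapHomologicalComplex _).obj P

/-- map of tensor complexes -/
abbrev tcMap {A : Type} [CommRing A] {X Y : ModuleCat.{0} A} (f : X ⟶ Y)
    (P : ChainComplex (ModuleCat.{0} A) ℕ) : tc X P ⟶ tc Y P :=
  (NatTrans.mapHomologicalComplex ((tensoringLeft (ModuleCat.{0} A)).map f) _).app P

/-- short complex of tensor complexes -/
abbrev tcS {A : Type} [CommRing A] (S : ShortComplex (ModuleCat.{0} A))
    (P : ChainComplex (ModuleCat.{0} A) ℕ) : ShortComplex (ChainComplex (ModuleCat.{0} A) ℕ) :=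
  ShortComplex.mk (tcMap S.f P) (tcMap S.g P) (by
    ext i : 1
    change S.f ▷ P.X i ≫ S.g ▷ P.X i = 0
    rw [← comp_whiskerRight, S.zero]
    exact MonoidalPreadditive.zero_whiskerRight)

lemma tcS_shortExact {A : Type} [CommRing A] {S : ShortComplex (ModuleCat.{0} A)}
    (hS : S.ShortExact) (P : ChainComplex (ModuleCat.{0} A) ℕ) [∀ i, Projective (P.X i)] :
    (tcS S P).ShortExact := by
  apply HomologicalComplex.shortExact_of_degreewise_shortExact
  intro i
  have : Module.Projective A (P.X i) := (IsProjective.iff_projective (P.X i)).mpr inferInstance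
  exact hS.map_of_exact (tensorRight (P.X i))

lemma tc_exactAt {A : Type} [CommRing A] (X : ModuleCat.{0} A) [Module.Flat A X]
    {P : ChainComplex (ModuleCat.{0} A) ℕ} {i : ℕ} (h : P.ExactAt i) : (tc X P).ExactAt i := by
  have h1 := Module.Flat.lTensor_shortComplex_exact X (P.sc i) h
  exact h1

/-- H0 iso -/
def h0Iso {A : Type} [CommRing A] (X : ModuleCat.{0} A) {k : ModuleCat.{0} A}
    (P : ProjectiveResolution k) : (tc X P.complex).homology 0 ≅ X ⊗ k :=
  have : PreservesFiniteColimits ((tensoringLeft (ModuleCat.{0} A)).obj X) := 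
    inferInstanceAs (PreservesFiniteColimits (tensorLeft X))
  ChainComplex.isoHomologyι₀ (tc X P.complex) ≪≫
  asIso (P.fromLeftDerivedZero' ((tensoringLeft (ModuleCat.{0} A)).obj X))

lemma h0Iso_nat {A : Type} [CommRing A] {X Y : ModuleCat.{0} A} (f : X ⟶ Y) {k : ModuleCat.{0} A}
    (P : ProjectiveResolution k) : 
    HomologicalComplex.homologyMap (tcMap f P.complex) 0 ≫ (h0Iso Y P).hom = (h0Iso X P).hom ≫ f ▷ k := by
  have h1 : P.fromLeftDerivedZero' ((tensoringLeft (ModuleCat.{0} A)).obj X) ≫ f ▷ k =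
      HomologicalComplex.opcyclesMap (tcMap f P.complex) 0 ≫
        P.fromLeftDerivedZero' ((tensoringLeft (ModuleCat.{0} A)).obj Y) := by
    rw [← cancel_epi (HomologicalComplex.pOpcycles _ _),
      P.pOpcycles_comp_fromLeftDerivedZero'_assoc, HomologicalComplex.p_opcyclesMap_assoc,
      P.pOpcycles_comp_fromLeftDerivedZero']
    exact ((tensoringLeft (ModuleCat.{0} A)).map f).naturality _
  simp only [h0Iso, Iso.trans_hom, asIso_hom, Category.assoc]
  rw [h1]
  change _ ≫ (tc Y P.complex).homologyι 0 ≫ _ = (tc X P.complex).homologyι 0 ≫ _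
  rw [HomologicalComplex.homologyι_naturality_assoc]

def torIso {A : Type} [CommRing A] {S : ShortComplex (ModuleCat.{0} A)}
    (hS : S.ShortExact) [Module.Flat A S.X₂] {k : ModuleCat.{0} A} (hz : S.f ▷ k = 0) :
    ((Tor (ModuleCat A) 1).obj S.X₃).obj k ≅ S.X₁ ⊗ k := by
  let P := projectiveResolution k
  have hT := tcS_shortExact hS P.complex
  have h1 : IsZero ((tc S.X₂ P.complex).homology 1) :=
    ((tc S.X₂ P.complex).exactAt_iff_isZero_homology 1).mp (tc_exactAt _ (P.complex_exactAt_succ 0))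
  have h2 : HomologicalComplex.homologyMap (tcMap S.f P.complex) 0 = 0 := by
    rw [← cancel_mono (h0Iso S.X₂ P).hom, h0Iso_nat, hz]
    simp
  have hm : Mono (hT.δ 1 0 rfl) := (hT.homology_exact₃ 1 0 rfl).mono_g (h1.eq_of_src _ _)
  have he : Epi (hT.δ 1 0 rfl) := (hT.homology_exact₁ 1 0 rfl).epi_f h2
  have : IsIso (hT.δ 1 0 rfl) := isIso_of_mono_of_epi _
  let e : (tc S.X₃ P.complex).homology 1 ≅ (tc S.X₁ P.complex).homology 0 := asIso (hT.δ 1 0 rfl)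
  exact P.isoLeftDerivedObj ((tensoringLeft (ModuleCat.{0} A)).obj S.X₃) 1 ≪≫ e ≪≫ h0Iso S.X₁ P

end TorPart


lemma exists_gen {A N : Type} [CommRing A] [IsLocalRing A] [AddCommGroup N] [Module A N]
    [Module.Finite A N] {n : ℕ}
    (h : Module.finrank (A ⧸ maximalIdeal A) (TensorProduct A (A ⧸ maximalIdeal A) N) ≤ n) :
    ∃ q : (Fin n → A) →ₗ[A] N, Function.Surjective q := by
  have h1 := TensorProduct.spanFinrank_top_eq_of_residueField (R := A) (⊤ : Submodule A N)
    Module.Finite.fg_top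
  rw [← Module.finrank_eq_spanFinrank_of_free] at h1
  have h2 : Module.finrank (ResidueField A) (TensorProduct A (ResidueField A) (⊤ : Submodule A N)) ≤ n := by
    rw [(Submodule.topEquiv.baseChange A (ResidueField A) (⊤ : Submodule A N) N).finrank_eq]
    exact h
  rw [h1] at h2
  obtain ⟨s, hs, hsp⟩ := Submodule.FG.exists_span_finset_card_eq_spanFinrank
    (Module.Finite.fg_top (R := A) (M := N))
  rw [← hs] at h2
  have hs' : Fintype.card s ≤ Fintype.card (Fin n) := by simpa using h2
  obtain ⟨e⟩ := Function.Embedding.nonempty_of_card_le hs'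
  refine ⟨Fintype.linearCombination A (Function.extend e (fun x : s => (x : N)) 0), ?_⟩
  rw [← LinearMap.range_eq_top, Fintype.range_linearCombination, eq_top_iff, ← hsp]
  apply Submodule.span_mono
  intro x hx
  exact ⟨e ⟨x, hx⟩, by rw [e.injective.extend_apply]⟩

lemma whisker_zero {A M : Type} [CommRing A] [IsLocalRing A] [AddCommGroup M] [Module A M]
    [Module.Finite A M] {n : ℕ}
    (h : Module.finrank (A ⧸ maximalIdeal A) (TensorProduct A (A ⧸ maximalIdeal A) M) = n)
    (p : (Fin n → A) →ₗ[A] M) (hp : Function.Surjective p) :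
    (LinearMap.ker p).subtype.lTensor (A ⧸ maximalIdeal A) = 0 := by
  let _ : Field (A ⧸ maximalIdeal A) := Ideal.Quotient.field _
  let P := p.baseChange (A ⧸ maximalIdeal A)
  have hPs : Function.Surjective P := LinearMap.lTensor_surjective _ hp
  have hd : Module.finrank (A ⧸ maximalIdeal A) (TensorProduct A (A ⧸ maximalIdeal A) (Fin n → A))
      = Module.finrank (A ⧸ maximalIdeal A) (TensorProduct A (A ⧸ maximalIdeal A) M) := by
    rw [h, Module.finrank_baseChange]; simp
  have hPi : Function.Injective P := (LinearMap.injective_iff_surjective_of_finrank_eq_finrank hd).mpr hPs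
  refine LinearMap.ext fun x => ?_
  apply hPi
  rw [LinearMap.zero_apply, map_zero]
  change (p.lTensor _) _ = 0
  rw [← LinearMap.comp_apply, ← LinearMap.lTensor_comp]
  have : p ∘ₗ (LinearMap.ker p).subtype = 0 := by ext x; simp
  rw [this]; simp

lemma tor_equiv {A M : Type} [CommRing A] [IsLocalRing A] [AddCommGroup M] [Module A M] {n : ℕ}
    (p : (Fin n → A) →ₗ[A] M) (hp : Function.Surjective p)
    (hz : (LinearMap.ker p).subtype.lTensor (A ⧸ maximalIdeal A) = 0) :
    Nonempty ((((Tor (ModuleCat A) 1).obj (ModuleCat.of A M)).obj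
      (ModuleCat.of A (A ⧸ maximalIdeal A))) ≃ₗ[A]
      TensorProduct A (A ⧸ maximalIdeal A) (LinearMap.ker p)) := by
  let S : ShortComplex (ModuleCat.{0} A) := ShortComplex.mk
    (ModuleCat.ofHom (LinearMap.ker p).subtype) (ModuleCat.ofHom p) (by ext x; simp)
  have hS : S.ShortExact := ModuleCat.shortComplex_shortExact S
    (LinearMap.exact_subtype_ker_map p) (Submodule.injective_subtype _) hp
  have : Module.Flat A S.X₂ := inferInstanceAs (Module.Flat A (Fin n → A))
  have e := torIso hS (k := ModuleCat.of A (A ⧸ maximalIdeal A)) (by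
    ext1
    have : (LinearMap.ker p).subtype.rTensor (A ⧸ maximalIdeal A) = 0 := by
      rw [← LinearMap.comm_comp_lTensor_comp_comm_eq, hz]
      simp
    exact this)
  exact ⟨e.toLinearEquiv ≪≫ₗ TensorProduct.comm A _ _⟩

/-- Calegari–Geraghty freeness in the regular case: if `A → B` is a local morphism of
regular local rings with `dim A = dim B + 1` and `M` is a `B`-module, finite over `A`,
with `dim_k Tor₁^A(M,k) ≤ dim_k Tor₀^A(M,k)`, then `M` is free over `B`. -/
theorem CG_freeness_regular_case
    {A B M : Type} [CommRing A] [IsLocalRing A] [CommRing B] [IsLocalRing B]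
    [Algebra A B] [IsLocalHom (algebraMap A B)]
    (hA : IsRegularLocal A) (hB : IsRegularLocal B)
    (hdim : ringKrullDim A = ringKrullDim B + 1)
    [AddCommGroup M] [Module B M] [Module A M] [IsScalarTower A B M]
    [Module.Finite A M]
    (htor : Module.IsTorsionBySet A (torOne A M) ((maximalIdeal A : Ideal A) : Set A))
    (hineq :
      (letI := Module.IsTorsionBySet.module htor
       Module.finrank (A ⧸ maximalIdeal A) (torOne A M)) ≤
      Module.finrank (A ⧸ maximalIdeal A)
        (TensorProduct A (A ⧸ maximalIdeal A) M)) :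
    Module.Free B M := by
  have hNA := hA.1
  have hNB := hB.1
  obtain ⟨a, hA'⟩ := regN_of (R := A) hA.2.symm
  obtain ⟨d, hB'⟩ := regN_of (R := B) hB.2.symm
  have had : a = d + 1 := by
    have h := hdim
    rw [hA'.2.1, hB'.2.1] at h
    exact_mod_cast h
  subst had
  obtain ⟨p, hp⟩ := exists_gen (A := A) (N := M) le_rfl
  obtain ⟨e⟩ := tor_equiv p hp (whisker_zero rfl p hp)
  let _ := Module.IsTorsionBySet.module htor
  have hst : IsScalarTower A (A ⧸ maximalIdeal A) (torOne A M) :=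
    Module.IsTorsionBySet.isScalarTower htor
  let e1 : torOne A M ≃ₗ[A] TensorProduct A (A ⧸ maximalIdeal A) (LinearMap.ker p) := e
  let e2 := e1.extendScalarsOfSurjective (S := A ⧸ maximalIdeal A) Ideal.Quotient.mk_surjective
  have hfr := e2.finrank_eq
  obtain ⟨q, hq⟩ := exists_gen (A := A) (N := LinearMap.ker p) (hfr ▸ hineq)
  refine final_step hA' hB' p hp ((LinearMap.ker p).subtype ∘ₗ q) ?_
  rw [LinearMap.range_comp, LinearMap.range_eq_top.mpr hq, Submodule.map_top,
    Submodule.range_subtype]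
end

section
/- Let A be a Noetherian local ring, M a finite A-module, I ⊆ m_A a proper ideal, Ā = A/I and M̄ = M/IM. Then t_Ā(M̄) ≤ t_A(M), where the torsion ratio t_R(N) of a nonzero finite module N over a Noetherian local ring R with residue field k is dim_k Tor_1^R(N,k) / dim_k Tor_0^R(N,k), and t_R(0) = 0. -/
open IsLocalRing CategoryTheory

/-- The torsion ratio `t_A(M) = dim_k Tor₁^A(M,k) / dim_k Tor₀^A(M,k)` (interpreted as
`0` when `M = 0`, via the convention `0 / 0 = 0`). The hypothesis `ht` records the fact
that `Tor₁^A(M,k)` is annihilated by `𝔪`, which endows it with its `k`-vector space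
structure. -/
noncomputable def torsionRatio (A : Type) [CommRing A] [IsLocalRing A]
    (M : Type) [AddCommGroup M] [Module A M]
    (ht : Module.IsTorsionBySet A (torOne A M) ((maximalIdeal A : Ideal A) : Set A)) :
    ℚ :=
  ((letI := Module.IsTorsionBySet.module ht
    Module.finrank (A ⧸ maximalIdeal A) (torOne A M)) : ℚ) /
  ((Module.finrank (A ⧸ maximalIdeal A)
    (TensorProduct A (A ⧸ maximalIdeal A) M)) : ℚ)


namespace TorsionRatioAux

open CategoryTheory.Limits CategoryTheory.MonoidalCategory

section Resolution

variable {C : Type*} [Category* C] [Abelian C] [EnoughProjectives C] {P Z : C} (p : P ⟶ Z)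

lemma d_comp {X Y : C} (f : X ⟶ Y) : Projective.d f ≫ f = 0 :=
  (Category.assoc _ _ _).trans ((congrArg (Projective.π (kernel f) ≫ ·)
    (kernel.condition f)).trans comp_zero)

noncomputable def resComplex : ChainComplex C ℕ :=
  ChainComplex.mk' P (Projective.syzygies p)
    (Projective.d p) (fun f => ⟨Projective.syzygies f, Projective.d f, d_comp f⟩)

lemma resComplex_d_1_0 :
    (resComplex p).d 1 0 = Projective.d p := by
  simp [resComplex]

lemma resComplex_exactAt_succ (n : ℕ) :
    (resComplex p).ExactAt (n + 1) := by
  rw [HomologicalComplex.exactAt_iff' _ (n + 1 + 1) (n + 1) n (by simp) (by simp)]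
  refine (ShortComplex.exact_iff_of_iso (S₂ := ShortComplex.mk
    (Projective.d ((resComplex p).d (n + 1) n)) ((resComplex p).d (n + 1) n) (d_comp _)) ?_).2
    (exact_d_f _)
  exact ShortComplex.isoMk
    (ChainComplex.mk'XIso P (Projective.syzygies p) (Projective.d p)
      (fun f => ⟨Projective.syzygies f, Projective.d f, d_comp f⟩) n)
    (Iso.refl _) (Iso.refl _)
    (Eq.trans (ChainComplex.mk'_d P (Projective.syzygies p) (Projective.d p)
      (fun f => ⟨Projective.syzygies f, Projective.d f, d_comp f⟩) n).symm
      (Category.comp_id _).symm)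
    ((Category.id_comp _).trans (Category.comp_id _).symm)

lemma resComplex_projective [Projective P] (n : ℕ) : Projective ((resComplex p).X n) := by
  obtain (_ | _ | _ | n) := n
  · assumption
  all_goals apply Projective.projective_over

noncomputable def res [Projective P] [Epi p] : ProjectiveResolution Z where
  complex := resComplex p
  projective := resComplex_projective p
  π := (ChainComplex.toSingle₀Equiv _ _).symm ⟨p, by
          rw [resComplex_d_1_0]; exact d_comp p⟩
  quasiIso := ⟨fun n => by
    cases n
    · rw [ChainComplex.quasiIsoAt₀_iff, ShortComplex.quasiIso_iff_of_zeros']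
      · refine (ShortComplex.exact_and_epi_g_iff_of_iso ?_).2
          ⟨exact_d_f p, by dsimp; infer_instance⟩
        exact ShortComplex.isoMk (Iso.refl _) (Iso.refl _) (Iso.refl _)
          ((Category.id_comp _).trans ((resComplex_d_1_0 p).symm.trans (Category.comp_id _).symm))
          ((Category.id_comp _).trans (Eq.trans (ChainComplex.toSingle₀Equiv_symm_apply_f_zero
            (C := resComplex p) p _).symm
            (Category.comp_id _).symm))
      all_goals rfl
    · rw [quasiIsoAt_iff_exactAt']
      · apply resComplex_exactAt_succ
      · apply ChainComplex.exactAt_succ_single_obj⟩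

end Resolution

section Alg

variable {A : Type} [CommRing A] (M : Type) [AddCommGroup M] [Module A M]

/-- If `C₂ → C₁ → P` is exact with `range g = K`, then the homology of
`M ⊗ C₂ → M ⊗ C₁ → M ⊗ P` is the kernel of `M ⊗ K → M ⊗ P`. -/
lemma homology_equiv {C₂ C₁ P : Type} [AddCommGroup C₂] [AddCommGroup C₁] [AddCommGroup P]
    [Module A C₂] [Module A C₁] [Module A P] (f : C₂ →ₗ[A] C₁) (g : C₁ →ₗ[A] P)
    (hfg : LinearMap.range f = LinearMap.ker g) (K : Submodule A P)
    (hK : LinearMap.range g = K)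
    (h0 : ∀ x, f.lTensor M x ∈ LinearMap.ker (g.lTensor M)) :
    Nonempty ((LinearMap.ker (g.lTensor M) ⧸
      LinearMap.range ((f.lTensor M).codRestrict (LinearMap.ker (g.lTensor M)) h0)) ≃ₗ[A]
      LinearMap.ker (K.subtype.lTensor M)) := by
  subst hK
  let q := g.rangeRestrict
  have hq : Function.Surjective q := g.surjective_rangeRestrict
  have hex : Function.Exact f q := by
    rw [LinearMap.exact_iff, LinearMap.ker_rangeRestrict, hfg]
  have hT : Function.Exact (f.lTensor M) (q.lTensor M) := lTensor_exact M hex hq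
  have hqT : Function.Surjective (q.lTensor M) := LinearMap.lTensor_surjective M hq
  have hcomp : ∀ x, (LinearMap.range g).subtype.lTensor M (q.lTensor M x) = g.lTensor M x := by
    intro x
    rw [← LinearMap.comp_apply, ← LinearMap.lTensor_comp]
    rfl
  let r : LinearMap.ker (g.lTensor M) →ₗ[A]
      LinearMap.ker ((LinearMap.range g).subtype.lTensor M) :=
    (q.lTensor M).restrict (fun x hx => by
      rw [LinearMap.mem_ker] at hx ⊢; rw [hcomp, hx])
  have hr : Function.Surjective r := by
    rintro ⟨y, hy⟩
    obtain ⟨x, rfl⟩ := hqT y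
    refine ⟨⟨x, ?_⟩, rfl⟩
    rw [LinearMap.mem_ker] at hy ⊢
    rw [← hcomp, hy]
  have hker : LinearMap.range ((f.lTensor M).codRestrict (LinearMap.ker (g.lTensor M)) h0)
      = LinearMap.ker r := by
    ext ⟨x, hx⟩
    constructor
    · rintro ⟨y, hy⟩
      rw [LinearMap.mem_ker]
      apply Subtype.ext
      have : f.lTensor M y = x := congrArg Subtype.val hy
      exact (hT x).2 ⟨y, this⟩
    · intro h
      obtain ⟨y, hy⟩ := (hT x).1 (congrArg Subtype.val (LinearMap.mem_ker.1 h))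
      exact ⟨y, Subtype.ext hy⟩
  exact ⟨(Submodule.quotEquivOfEq _ _ hker).trans (r.quotKerEquivOfSurjective hr)⟩

/-- The multiplication map `M ⊗ J → M`. -/
noncomputable def mulMap (J : Ideal A) : TensorProduct A M J →ₗ[A] M :=
  (TensorProduct.rid A M).toLinearMap ∘ₗ (Submodule.subtype J).lTensor M

@[simp] lemma mulMap_tmul (J : Ideal A) (x : M) (a : J) :
    mulMap M J (x ⊗ₜ a) = (a : A) • x := by
  simp [mulMap]

lemma tor_equiv (J : Ideal A) :
    Nonempty ((((Tor (ModuleCat A) 1).obj (ModuleCat.of A M)).obj (ModuleCat.of A (A ⧸ J)) :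
      ModuleCat A) ≃ₗ[A] LinearMap.ker (mulMap M J)) := by
  let p : ModuleCat.of A A ⟶ ModuleCat.of A (A ⧸ J) := ModuleCat.ofHom J.mkQ
  have : Epi p := (ModuleCat.epi_iff_surjective _).2 J.mkQ_surjective
  have : Projective (ModuleCat.of A A) := ModuleCat.projective_of_free (Module.Basis.singleton Unit A)
  let R := res p
  let F := (tensoringLeft (ModuleCat A)).obj (ModuleCat.of A M)
  let D := (F.mapHomologicalComplex (ComplexShape.down ℕ)).obj R.complex
  let e1 := R.isoLeftDerivedObj F 1
  let e2 : D.homology 1 ≅ (D.sc' 2 1 0).homology := D.homologyIsoSc' 2 1 0 (by simp) (by simp)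
  let e3 := (D.sc' 2 1 0).moduleCatHomologyIso
  have hex1 : ((resComplex p).sc' 2 1 0).Exact := by
    have := resComplex_exactAt_succ p 0
    rwa [HomologicalComplex.exactAt_iff' _ 2 1 0 (by simp) (by simp)] at this
  have h1 : LinearMap.range ((resComplex p).d 2 1).hom = LinearMap.ker ((resComplex p).d 1 0).hom :=
    hex1.moduleCat_range_eq_ker
  have h2 : LinearMap.range (Projective.d p).hom = LinearMap.ker p.hom :=
    (exact_d_f p).moduleCat_range_eq_ker
  have h3 : LinearMap.range ((resComplex p).d 1 0).hom = J := by
    rw [resComplex_d_1_0]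
    exact h2.trans J.ker_mkQ
  obtain ⟨e4⟩ := homology_equiv M ((resComplex p).d 2 1).hom ((resComplex p).d 1 0).hom
    h1 J h3 (D.sc' 2 1 0).moduleCat_zero_apply
  have h5 : LinearMap.ker (mulMap M J) = LinearMap.ker ((Submodule.subtype J).lTensor M) :=
    LinearEquiv.ker_comp _ _
  exact ⟨(((e1 ≪≫ e2 ≪≫ e3).toLinearEquiv).trans e4).trans (LinearEquiv.ofEq _ _ h5.symm)⟩

lemma finrank_eq_length {A : Type} [CommRing A] (J : Ideal A) [J.IsMaximal] (V : Type)
    [AddCommGroup V] [Module A V] [Module (A ⧸ J) V] [IsScalarTower A (A ⧸ J) V] :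
    Module.finrank (A ⧸ J) V = (Module.length A V).toNat := by
  let := Ideal.Quotient.field J
  rw [Module.length_eq_of_surjective (R := A ⧸ J) Ideal.Quotient.mk_surjective,
    Module.length_eq_rank]
  rfl

lemma length_ne_top {A : Type} [CommRing A] (J : Ideal A) [J.IsMaximal] (V : Type)
    [AddCommGroup V] [Module A V] [Module (A ⧸ J) V] [IsScalarTower A (A ⧸ J) V]
    [Module.Finite A V] :
    Module.length A V ≠ ⊤ := by
  let := Ideal.Quotient.field J
  have : Module.Finite (A ⧸ J) V := Module.Finite.of_restrictScalars_finite A _ _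
  rw [Module.length_eq_of_surjective (R := A ⧸ J) Ideal.Quotient.mk_surjective,
    Module.length_eq_finrank]
  simp

end Alg

section Red

variable {A : Type} [CommRing A] (M : Type) [AddCommGroup M] [Module A M]
  (I J : Ideal A)

local notation "Mb" => M ⧸ (I • ⊤ : Submodule A M)

/-- The reduction map. -/
noncomputable def redMap (J' : Ideal (A ⧸ I)) (hJ : J ≤ J'.comap (Ideal.Quotient.mk I)) :
    TensorProduct A M J →ₗ[A] TensorProduct (A ⧸ I) Mb J' :=
  TensorProduct.lift (LinearMap.mk₂ A
    (fun (x : M) (a : J) =>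
      (TensorProduct.tmul (A ⧸ I) (Submodule.Quotient.mk x : Mb)
        (⟨Ideal.Quotient.mk I a, hJ a.2⟩ : J')))
    (fun x y a => by rw [Submodule.Quotient.mk_add, TensorProduct.add_tmul])
    (fun c x a => by rw [Submodule.Quotient.mk_smul, TensorProduct.smul_tmul'])
    (fun x a b => by
      rw [← TensorProduct.tmul_add]; congr 1)
    (fun c x a => by
      have : (⟨Ideal.Quotient.mk I ((c • a : J) : A), hJ (c • a).2⟩ : J')
        = (Ideal.Quotient.mk I c) • (⟨Ideal.Quotient.mk I a, hJ a.2⟩ : J') := by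
        apply Subtype.ext
        simp
      rw [this, ← TensorProduct.smul_tmul, TensorProduct.smul_tmul']
      rfl))

lemma ker_surj (hIJ : I ≤ J) (J' : Ideal (A ⧸ I)) (hJ : J = J'.comap (Ideal.Quotient.mk I)) :
    ∃ f : LinearMap.ker (mulMap M J) →ₗ[A] LinearMap.ker (mulMap (A := A ⧸ I) Mb J'),
      Function.Surjective f := by
  let Φ := redMap M I J J' hJ.le
  have hΦ : ∀ (x : M) (a : J), Φ (x ⊗ₜ a) = (TensorProduct.tmul (A ⧸ I)
    (Submodule.Quotient.mk x : Mb) (⟨Ideal.Quotient.mk I a, hJ.le a.2⟩ : J')) := fun x a => rfl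
  have hcomm : ∀ z, mulMap (A := A ⧸ I) Mb J' (Φ z) = Submodule.Quotient.mk (mulMap M J z) := by
    intro z
    induction z with
    | zero => simp
    | add x y hx hy => simp only [map_add, hx, hy, Submodule.Quotient.mk_add]
    | tmul x a => rw [hΦ, mulMap_tmul, mulMap_tmul]; rfl
  have hsurj : Function.Surjective Φ := by
    intro z
    induction z with
    | zero => exact ⟨0, map_zero _⟩
    | add x y hx hy =>
      obtain ⟨x, rfl⟩ := hx
      obtain ⟨y, rfl⟩ := hy
      exact ⟨x + y, map_add _ _ _⟩
    | tmul x a =>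
      obtain ⟨x, rfl⟩ := Submodule.Quotient.mk_surjective _ x
      obtain ⟨a, ha⟩ := a
      obtain ⟨a, rfl⟩ := Ideal.Quotient.mk_surjective a
      exact ⟨x ⊗ₜ ⟨a, hJ.ge ha⟩, rfl⟩
  have hlift : ∀ n ∈ (I • ⊤ : Submodule A M), ∃ z, mulMap M J z = n ∧ Φ z = 0 := by
    intro n hn
    induction hn using Submodule.smul_induction_on' with
    | smul a ha x hx =>
      refine ⟨x ⊗ₜ ⟨a, hIJ ha⟩, by simp, ?_⟩
      rw [hΦ]
      have : (⟨Ideal.Quotient.mk I a, hJ.le (hIJ ha)⟩ : J') = 0 :=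
        Subtype.ext (Ideal.Quotient.eq_zero_iff_mem.2 ha)
      rw [this, TensorProduct.tmul_zero]
    | add x _ y _ hx hy =>
      obtain ⟨z, h1, h2⟩ := hx
      obtain ⟨w, h3, h4⟩ := hy
      exact ⟨z + w, by rw [map_add, h1, h3], by rw [map_add, h2, h4, add_zero]⟩
  let f : LinearMap.ker (mulMap M J) →ₗ[A] LinearMap.ker (mulMap (A := A ⧸ I) Mb J') :=
    { toFun := fun z => ⟨Φ z, by rw [LinearMap.mem_ker, hcomm, LinearMap.mem_ker.1 z.2]; rfl⟩
      map_add' := fun x y => Subtype.ext (map_add Φ _ _)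
      map_smul' := fun c x => Subtype.ext (map_smul Φ _ _) }
  refine ⟨f, ?_⟩
  rintro ⟨y, hy⟩
  obtain ⟨x, rfl⟩ := hsurj y
  rw [LinearMap.mem_ker, hcomm, Submodule.Quotient.mk_eq_zero] at hy
  obtain ⟨z, h1, h2⟩ := hlift _ hy
  refine ⟨⟨x - z, ?_⟩, Subtype.ext ?_⟩
  · rw [LinearMap.mem_ker, map_sub, h1, sub_self]
  · change Φ (x - z) = Φ x
    rw [map_sub, h2, sub_zero]

lemma fiber_length (hIJ : I ≤ J) (J' : Ideal (A ⧸ I))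
    (hJ : J = J'.comap (Ideal.Quotient.mk I)) :
    Module.length A (TensorProduct A (A ⧸ J) M) =
      Module.length (A ⧸ I) (TensorProduct (A ⧸ I) ((A ⧸ I) ⧸ J') Mb) := by
  rw [(TensorProduct.quotTensorEquivQuotSMul M J).length_eq,
    (TensorProduct.quotTensorEquivQuotSMul Mb J').length_eq,
    ← Module.length_eq_of_surjective (S := A) (R := A ⧸ I) Ideal.Quotient.mk_surjective]
  let g : M →ₗ[A] Mb ⧸ (J' • ⊤ : Submodule (A ⧸ I) Mb) :=
    ((J' • ⊤ : Submodule (A ⧸ I) Mb).mkQ.restrictScalars A) ∘ₗ (I • ⊤ : Submodule A M).mkQ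
  have hg : Function.Surjective g :=
    (Submodule.mkQ_surjective _).comp (Submodule.mkQ_surjective _)
  have hlift : ∀ y ∈ (J' • ⊤ : Submodule (A ⧸ I) Mb),
      ∃ x ∈ (J • ⊤ : Submodule A M), (Submodule.Quotient.mk x : Mb) = y := by
    intro y hy
    induction hy using Submodule.smul_induction_on' with
    | smul a ha x hx =>
      obtain ⟨a, rfl⟩ := Ideal.Quotient.mk_surjective a
      obtain ⟨x, rfl⟩ := Submodule.Quotient.mk_surjective _ x
      exact ⟨a • x, Submodule.smul_mem_smul (hJ.ge ha) trivial, rfl⟩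
    | add x _ y _ hx hy =>
      obtain ⟨z, h1, rfl⟩ := hx
      obtain ⟨w, h3, rfl⟩ := hy
      exact ⟨z + w, add_mem h1 h3, rfl⟩
  have hker : (J • ⊤ : Submodule A M) = LinearMap.ker g := by
    apply le_antisymm
    · rw [Submodule.smul_le]
      intro a ha x _
      rw [LinearMap.mem_ker]
      refine (Submodule.Quotient.mk_eq_zero _).2 ?_
      exact Submodule.smul_mem_smul (r := Ideal.Quotient.mk I a)
        (n := (Submodule.Quotient.mk x : Mb)) (hJ.le ha) trivial
    · intro x hx
      have hx' : (Submodule.Quotient.mk x : Mb) ∈ (J' • ⊤ : Submodule (A ⧸ I) Mb) :=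
        (Submodule.Quotient.mk_eq_zero _).1 hx
      obtain ⟨w, hw, h⟩ := hlift _ hx'
      have h2 := (Submodule.Quotient.eq _).1 h
      have h3 := Submodule.smul_mono_left (N := (⊤ : Submodule A M)) hIJ h2
      simpa using sub_mem hw h3
  exact ((Submodule.quotEquivOfEq _ _ hker).trans (g.quotKerEquivOfSurjective hg)).length_eq

end Red

lemma torsionRatio_eq (A : Type) [CommRing A] [IsLocalRing A]
    (M : Type) [AddCommGroup M] [Module A M]
    (ht : Module.IsTorsionBySet A (torOne A M) ((maximalIdeal A : Ideal A) : Set A)) :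
    torsionRatio A M ht = ((Module.length A (LinearMap.ker (mulMap M (maximalIdeal A)))).toNat : ℚ)
      / ((Module.length A (TensorProduct A (A ⧸ maximalIdeal A) M)).toNat : ℚ) := by
  obtain ⟨e⟩ := tor_equiv M (maximalIdeal A)
  let := Module.IsTorsionBySet.module ht
  have : IsScalarTower A (A ⧸ maximalIdeal A) (torOne A M) :=
    Module.IsTorsionBySet.isScalarTower ht
  unfold torsionRatio
  rw [← e.length_eq]
  congr 2
  · exact finrank_eq_length (maximalIdeal A) (torOne A M)
  · exact finrank_eq_length (maximalIdeal A) _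

end TorsionRatioAux

open TorsionRatioAux
/-- The torsion ratio decreases under reduction modulo a proper ideal `I ⊆ 𝔪`:
`t_{A/I}(M/IM) ≤ t_A(M)`. -/
theorem torsionRatio_quotient_le
    {A : Type} [CommRing A] [IsLocalRing A] [IsNoetherianRing A]
    {M : Type} [AddCommGroup M] [Module A M] [Module.Finite A M]
    (I : Ideal A) (hI : I ≤ maximalIdeal A)
    [IsLocalRing (A ⧸ I)]
    (ht : Module.IsTorsionBySet A (torOne A M) ((maximalIdeal A : Ideal A) : Set A))
    (ht' : Module.IsTorsionBySet (A ⧸ I)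
      (torOne (A ⧸ I) (M ⧸ (I • ⊤ : Submodule A M)))
      ((maximalIdeal (A ⧸ I) : Ideal (A ⧸ I)) : Set (A ⧸ I))) :
    torsionRatio (A ⧸ I) (M ⧸ (I • ⊤ : Submodule A M)) ht' ≤ torsionRatio A M ht := by
  have hJ : maximalIdeal A = (maximalIdeal (A ⧸ I)).comap (Ideal.Quotient.mk I) :=
    (IsLocalRing.eq_maximalIdeal (Ideal.comap_isMaximal_of_surjective _
      Ideal.Quotient.mk_surjective)).symm
  rw [torsionRatio_eq, torsionRatio_eq, fiber_length M I (maximalIdeal A) hI _ hJ]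
  obtain ⟨f, hf⟩ := ker_surj M I (maximalIdeal A) hI _ hJ
  have h1 := Module.length_le_of_surjective f hf
  rw [Module.length_eq_of_surjective (S := A) (R := A ⧸ I) Ideal.Quotient.mk_surjective] at h1
  have hfin : Module.length A (LinearMap.ker (mulMap M (maximalIdeal A))) ≠ ⊤ := by
    obtain ⟨e⟩ := tor_equiv M (maximalIdeal A)
    let := Module.IsTorsionBySet.module ht
    have : IsScalarTower A (A ⧸ maximalIdeal A) (torOne A M) :=
      Module.IsTorsionBySet.isScalarTower ht
    have : Module.Finite A (torOne A M) := Module.Finite.equiv e.symm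
    rw [← e.length_eq]
    exact length_ne_top (maximalIdeal A) (torOne A M)
  gcongr
end
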